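/- Let ω be a minuscule weight, I = {α ∈ S : ⟨ω, α∨⟩ = 0} and W^I = {w ∈ W : w(α) > 0 for all α ∈ I}. Then for all τ, σ ∈ W^I: τ(ω) ≤ σ(ω) if and only if σ ≤ τ, i.e., if and only if ℓ(τ) = ℓ(σ) + ℓ(τσ^{−1}). -/

import Mathlib

open scoped RealInnerProductSpace

/-- A finite reduced crystallographic root system `Φ` spanning a real inner product
space `V`, together with a fixed base of simple roots `α 0, …, α (l-1)`: every root is
a nonnegative or nonpositive integral combination of the simple roots.  The simple
reflections `s i` are given by the usual formula `s_α(λ) = λ − ⟨λ, α∨⟩ α`. -/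
structure RootSystemWithBase (V : Type*) [NormedAddCommGroup V] [InnerProductSpace ℝ V] where
  l : ℕ
  Φ : Finset V
  α : Fin l → V
  s : Fin l → V ≃ₗ[ℝ] V
  α_mem : ∀ i, α i ∈ Φ
  root_ne_zero : ∀ β ∈ Φ, β ≠ (0 : V)
  root_span : Submodule.span ℝ (Φ : Set V) = ⊤
  simple_indep : LinearIndependent ℝ α
  crystallographic : ∀ β ∈ Φ, ∀ γ ∈ Φ, ∃ z : ℤ, 2 * ⟪β, γ⟫ / ⟪γ, γ⟫ = (z : ℝ)
  reduced : ∀ β ∈ Φ, ∀ c : ℝ, c • β ∈ Φ → c = 1 ∨ c = -1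
  base : ∀ β ∈ Φ,
    (∃ c : Fin l → ℤ, (∀ i, 0 ≤ c i) ∧ β = ∑ i, (c i : ℝ) • α i) ∨
    (∃ c : Fin l → ℤ, (∀ i, 0 ≤ c i) ∧ β = -(∑ i, (c i : ℝ) • α i))
  s_apply : ∀ i v, s i v = v - (2 * ⟪v, α i⟫ / ⟪α i, α i⟫) • α i
  s_root : ∀ β ∈ Φ, ∀ i, s i β ∈ Φ

namespace RootSystemWithBase

variable {V : Type*} [NormedAddCommGroup V] [InnerProductSpace ℝ V]

/-- The pairing `⟨λ, β∨⟩ = 2(λ,β)/(β,β)`. -/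
noncomputable def pairing (_D : RootSystemWithBase V) (lam β : V) : ℝ :=
  2 * ⟪lam, β⟫ / ⟪β, β⟫

/-- The Weyl group: the subgroup of `GL(V)` generated by the simple reflections. -/
def W (D : RootSystemWithBase V) : Subgroup (V ≃ₗ[ℝ] V) := Subgroup.closure (Set.range D.s)

/-- The product `s_{i₁} · s_{i₂} ⋯ s_{i_k}` of simple reflections along a word. -/
def wordProd (D : RootSystemWithBase V) (L : List (Fin D.l)) : V ≃ₗ[ℝ] V := (L.map D.s).prod

/-- The length `ℓ(w)`: the least `k` such that `w` is a product of `k` simple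
reflections. -/
noncomputable def len (D : RootSystemWithBase V) (w : V ≃ₗ[ℝ] V) : ℕ :=
  sInf {k | ∃ L : List (Fin D.l), L.length = k ∧ D.wordProd L = w}

/-- `v` is a linear combination of the simple roots with all coefficients `≥ 0`. -/
def IsNonnegComb (D : RootSystemWithBase V) (v : V) : Prop :=
  ∃ c : Fin D.l → ℝ, (∀ i, 0 ≤ c i) ∧ v = ∑ i, c i • D.α i

/-- `v > 0`: a nonzero nonnegative combination of the simple roots. -/
def IsPos (D : RootSystemWithBase V) (v : V) : Prop := D.IsNonnegComb v ∧ v ≠ 0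

/-- `x ≤ y` for vectors: `y − x` is a nonnegative combination of the simple roots. -/
def vle (D : RootSystemWithBase V) (x y : V) : Prop := D.IsNonnegComb (y - x)

/-- `λ` is dominant: `⟨λ, αᵢ∨⟩ ≥ 0` for all `i`. -/
def IsDominant (D : RootSystemWithBase V) (lam : V) : Prop :=
  ∀ i, 0 ≤ D.pairing lam (D.α i)

/-- `ω` is minuscule: dominant with `⟨ω, β∨⟩ ∈ {−1, 0, 1}` for every root `β`. -/
def IsMinuscule (D : RootSystemWithBase V) (ω : V) : Prop :=
  D.IsDominant ω ∧ ∀ β ∈ D.Φ, D.pairing ω β = -1 ∨ D.pairing ω β = 0 ∨ D.pairing ω β = 1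

/-- `W^I = {w ∈ W : w(α) > 0 for all α ∈ I}` where `I = {α ∈ S : ⟨ω, α∨⟩ = 0}`. -/
def WI (D : RootSystemWithBase V) (ω : V) : Set (V ≃ₗ[ℝ] V) :=
  {w | w ∈ D.W ∧ ∀ i, D.pairing ω (D.α i) = 0 → D.IsPos (w (D.α i))}

/-- `w ≤ τ` in `W`:  `ℓ(τ) = ℓ(w) + ℓ(τ w⁻¹)`. -/
def wle (D : RootSystemWithBase V) (w τ : V ≃ₗ[ℝ] V) : Prop :=
  D.len τ = D.len w + D.len (τ * w⁻¹)

end RootSystemWithBase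

namespace RootSystemWithBase

variable {V : Type*} [NormedAddCommGroup V] [InnerProductSpace ℝ V]

lemma inner_α_pos (D : RootSystemWithBase V) (i : Fin D.l) : 0 < ⟪D.α i, D.α i⟫ :=
  real_inner_self_pos.mpr (D.root_ne_zero _ (D.α_mem i))

lemma s_apply' (D : RootSystemWithBase V) (i : Fin D.l) (v : V) :
    D.s i v = v - D.pairing v (D.α i) • D.α i := D.s_apply i v

lemma inner_s (D : RootSystemWithBase V) (i : Fin D.l) (u v : V) :
    ⟪D.s i u, D.s i v⟫ = ⟪u, v⟫ := by
  have h := (D.inner_α_pos i).ne'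
  rw [D.s_apply, D.s_apply]
  simp only [inner_sub_left, inner_sub_right, inner_smul_left, inner_smul_right]
  rw [real_inner_comm v (D.α i)]
  simp only [conj_trivial]
  field_simp
  ring

lemma s_s (D : RootSystemWithBase V) (i : Fin D.l) (v : V) : D.s i (D.s i v) = v := by
  have h := (D.inner_α_pos i).ne'
  rw [D.s_apply i (D.s i v), D.s_apply i v]
  simp only [inner_sub_left, inner_smul_left, conj_trivial]
  rw [sub_sub, ← add_smul]
  have : (2 * ⟪v, D.α i⟫ / ⟪D.α i, D.α i⟫ +
    2 * (⟪v, D.α i⟫ - 2 * ⟪v, D.α i⟫ / ⟪D.α i, D.α i⟫ * ⟪D.α i, D.α i⟫) /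
      ⟪D.α i, D.α i⟫) = 0 := by
    field_simp
    ring
  rw [this, zero_smul, sub_zero]

lemma s_mul_s (D : RootSystemWithBase V) (i : Fin D.l) : D.s i * D.s i = 1 := by
  ext v
  exact D.s_s i v

lemma s_inv (D : RootSystemWithBase V) (i : Fin D.l) : (D.s i)⁻¹ = D.s i :=
  inv_eq_of_mul_eq_one_left (D.s_mul_s i)

lemma s_α (D : RootSystemWithBase V) (i : Fin D.l) : D.s i (D.α i) = - D.α i := by
  have h := (D.inner_α_pos i).ne'
  rw [D.s_apply, mul_div_assoc, div_self h, mul_one, two_smul]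
  abel

lemma s_mem_W (D : RootSystemWithBase V) (i : Fin D.l) : D.s i ∈ D.W :=
  Subgroup.subset_closure ⟨i, rfl⟩

lemma wordProd_append (D : RootSystemWithBase V) (L M : List (Fin D.l)) :
    D.wordProd (L ++ M) = D.wordProd L * D.wordProd M := by
  simp [wordProd]

lemma wordProd_cons (D : RootSystemWithBase V) (i : Fin D.l) (M : List (Fin D.l)) :
    D.wordProd (i :: M) = D.s i * D.wordProd M := by
  simp [wordProd]

lemma wordProd_reverse (D : RootSystemWithBase V) (L : List (Fin D.l)) :
    D.wordProd L.reverse = (D.wordProd L)⁻¹ := by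
  induction L with
  | nil => simp [wordProd]
  | cons i L ih =>
    rw [List.reverse_cons, wordProd_append, ih, D.wordProd_cons i L, mul_inv_rev, s_inv]
    simp [wordProd]

lemma wordProd_mem (D : RootSystemWithBase V) (L : List (Fin D.l)) :
    D.wordProd L ∈ D.W := by
  induction L with
  | nil => simpa [wordProd] using D.W.one_mem
  | cons i L ih => rw [wordProd_cons]; exact D.W.mul_mem (D.s_mem_W i) ih

lemma exists_word (D : RootSystemWithBase V) {w : V ≃ₗ[ℝ] V} (hw : w ∈ D.W) :
    ∃ L, D.wordProd L = w := by
  induction hw using Subgroup.closure_induction with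
  | mem x hx =>
    obtain ⟨i, rfl⟩ := hx
    exact ⟨[i], by simp [wordProd]⟩
  | one => exact ⟨[], by simp [wordProd]⟩
  | mul x y _ _ hx hy =>
    obtain ⟨L, rfl⟩ := hx
    obtain ⟨M, rfl⟩ := hy
    exact ⟨L ++ M, D.wordProd_append L M⟩
  | inv x _ hx =>
    obtain ⟨L, rfl⟩ := hx
    exact ⟨L.reverse, D.wordProd_reverse L⟩

lemma inner_W (D : RootSystemWithBase V) {w : V ≃ₗ[ℝ] V} (hw : w ∈ D.W) (u v : V) :
    ⟪w u, w v⟫ = ⟪u, v⟫ := by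
  obtain ⟨L, rfl⟩ := D.exists_word hw
  clear hw
  induction L with
  | nil => simp [wordProd]
  | cons i L ih =>
    rw [wordProd_cons]
    exact (D.inner_s i _ _).trans ih

lemma root_W (D : RootSystemWithBase V) {w : V ≃ₗ[ℝ] V} (hw : w ∈ D.W) {β : V}
    (hβ : β ∈ D.Φ) : w β ∈ D.Φ := by
  obtain ⟨L, rfl⟩ := D.exists_word hw
  clear hw
  induction L with
  | nil => simpa [wordProd] using hβ
  | cons i L ih =>
    rw [wordProd_cons]
    exact D.s_root _ ih i

lemma pairing_W (D : RootSystemWithBase V) {w : V ≃ₗ[ℝ] V} (hw : w ∈ D.W) (u v : V) :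
    D.pairing (w u) v = D.pairing u (w⁻¹ v) := by
  have h : w (w⁻¹ v) = v := LinearEquiv.apply_symm_apply w v
  unfold pairing
  rw [← D.inner_W hw u, ← D.inner_W hw (w⁻¹ v), h]

lemma len_le (D : RootSystemWithBase V) (L : List (Fin D.l)) :
    D.len (D.wordProd L) ≤ L.length := Nat.sInf_le ⟨L, rfl, rfl⟩

lemma len_spec (D : RootSystemWithBase V) {w : V ≃ₗ[ℝ] V} (hw : w ∈ D.W) :
    ∃ L : List (Fin D.l), L.length = D.len w ∧ D.wordProd L = w := by
  obtain ⟨L, hL⟩ := D.exists_word hw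
  exact Nat.sInf_mem (s := {k | ∃ L : List (Fin D.l), L.length = k ∧ D.wordProd L = w})
    ⟨_, L, rfl, hL⟩

lemma len_mul_le (D : RootSystemWithBase V) {w u : V ≃ₗ[ℝ] V} (hw : w ∈ D.W) (hu : u ∈ D.W) :
    D.len (w * u) ≤ D.len w + D.len u := by
  obtain ⟨L, h1, rfl⟩ := D.len_spec hw
  obtain ⟨M, h2, rfl⟩ := D.len_spec hu
  rw [← wordProd_append, ← h1, ← h2, ← List.length_append]
  exact D.len_le _

lemma len_s_mul_le (D : RootSystemWithBase V) {w : V ≃ₗ[ℝ] V} (hw : w ∈ D.W) (i : Fin D.l) :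
    D.len (D.s i * w) ≤ D.len w + 1 := by
  obtain ⟨L, h1, rfl⟩ := D.len_spec hw
  rw [← wordProd_cons, ← h1]
  exact D.len_le _

lemma len_mul_s_le (D : RootSystemWithBase V) {w : V ≃ₗ[ℝ] V} (hw : w ∈ D.W) (i : Fin D.l) :
    D.len (w * D.s i) ≤ D.len w + 1 := by
  obtain ⟨L, h1, rfl⟩ := D.len_spec hw
  have : D.wordProd L * D.s i = D.wordProd (L ++ [i]) := by
    rw [wordProd_append]; simp [wordProd]
  rw [this, ← h1]
  exact (D.len_le _).trans (by simp)

/-- coefficients are determined -/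
lemma coeff_unique (D : RootSystemWithBase V) {c d : Fin D.l → ℝ}
    (h : ∑ i, c i • D.α i = ∑ i, d i • D.α i) : c = d := by
  have h2 := Fintype.linearIndependent_iff.mp D.simple_indep (fun i => c i - d i)
    (by simp only [sub_smul, Finset.sum_sub_distrib, h, sub_self])
  funext i
  linarith [h2 i]

lemma nonneg_add (D : RootSystemWithBase V) {x y : V} (hx : D.IsNonnegComb x)
    (hy : D.IsNonnegComb y) : D.IsNonnegComb (x + y) := by
  obtain ⟨c, hc, rfl⟩ := hx
  obtain ⟨d, hd, rfl⟩ := hy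
  exact ⟨fun i => c i + d i, fun i => add_nonneg (hc i) (hd i), by
    simp only [add_smul, Finset.sum_add_distrib]⟩

lemma nonneg_zero (D : RootSystemWithBase V) : D.IsNonnegComb 0 :=
  ⟨fun _ => 0, fun _ => le_rfl, by simp⟩

lemma nonneg_smul (D : RootSystemWithBase V) {x : V} {r : ℝ} (hr : 0 ≤ r)
    (hx : D.IsNonnegComb x) : D.IsNonnegComb (r • x) := by
  obtain ⟨c, hc, rfl⟩ := hx
  exact ⟨fun i => r * c i, fun i => mul_nonneg hr (hc i), by
    simp only [mul_smul, Finset.smul_sum]⟩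

lemma nonneg_sum (D : RootSystemWithBase V) {f : Fin D.l → V}
    (hf : ∀ i, D.IsNonnegComb (f i)) : D.IsNonnegComb (∑ i, f i) :=
  Finset.sum_induction f D.IsNonnegComb (fun _ _ => D.nonneg_add) D.nonneg_zero
    (fun i _ => hf i)

lemma nonneg_α (D : RootSystemWithBase V) (i : Fin D.l) : D.IsNonnegComb (D.α i) :=
  ⟨Pi.single i 1, fun j => by by_cases h : j = i <;> simp [Pi.single_apply, h],
    by simp [Pi.single_apply, ite_smul]⟩

lemma nonneg_antisymm (D : RootSystemWithBase V) {x : V} (hx : D.IsNonnegComb x)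
    (hy : D.IsNonnegComb (-x)) : x = 0 := by
  obtain ⟨c, hc, rfl⟩ := hx
  obtain ⟨d, hd, h⟩ := hy
  have h1 : ∑ i, (-c i) • D.α i = ∑ i, d i • D.α i := by
    rw [← h]; simp only [neg_smul, Finset.sum_neg_distrib]
  have h2 := D.coeff_unique h1
  have : ∀ i, c i = 0 := fun i => by
    have := congrFun h2 i
    linarith [hc i, hd i]
  simp [this]

lemma root_cases (D : RootSystemWithBase V) {β : V} (hβ : β ∈ D.Φ) :
    D.IsNonnegComb β ∨ D.IsNonnegComb (-β) := by
  rcases D.base β hβ with ⟨c, hc, h⟩ | ⟨c, hc, h⟩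
  · exact Or.inl ⟨fun i => c i, fun i => Int.cast_nonneg (hc i), h⟩
  · exact Or.inr ⟨fun i => c i, fun i => Int.cast_nonneg (hc i), by rw [h, neg_neg]⟩

lemma s_pos (D : RootSystemWithBase V) {β : V} (hβ : β ∈ D.Φ) (hp : D.IsNonnegComb β)
    (i : Fin D.l) (hne : β ≠ D.α i) : D.IsNonnegComb (D.s i β) := by
  rcases D.root_cases (D.s_root β hβ i) with h | h
  · exact h
  exfalso
  obtain ⟨c, hc, hc'⟩ := hp
  obtain ⟨d, hd, hd'⟩ := h
  rw [D.s_apply' i β] at hd'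
  set p := D.pairing β (D.α i)
  have h1 : ∑ k, c k • D.α k = ∑ k, ((Pi.single i p : Fin D.l → ℝ) k - d k) • D.α k := by
    simp only [sub_smul, Finset.sum_sub_distrib, ← hd', ← hc']
    simp [Pi.single_apply, ite_smul]
  have h2 := D.coeff_unique h1
  have h3 : ∀ k, k ≠ i → c k = 0 := fun k hk => by
    have := congrFun h2 k
    simp [Pi.single_apply, hk] at this
    linarith [hc k, hd k]
  have h4 : β = c i • D.α i := by
    rw [hc']
    exact Finset.sum_eq_single i (fun k _ hk => by rw [h3 k hk, zero_smul]) (by simp)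
  rcases D.reduced _ (D.α_mem i) (c i) (h4 ▸ hβ) with h5 | h5
  · rw [h5, one_smul] at h4; exact hne h4
  · linarith [hc i]

/-- Exchange lemma. -/
lemma exchange (D : RootSystemWithBase V) (L : List (Fin D.l)) :
    ∀ β ∈ D.Φ, D.IsNonnegComb β → D.IsNonnegComb (-((D.wordProd L)⁻¹ β)) →
      ∃ L' : List (Fin D.l), L'.length + 1 = L.length ∧
        ∀ v, D.wordProd L' v = D.wordProd L v - D.pairing (D.wordProd L v) β • β := by
  induction L with
  | nil =>
    intro β hβ hp hn
    exact absurd (D.nonneg_antisymm hp (by simpa [wordProd] using hn)) (D.root_ne_zero β hβ)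
  | cons j L ih =>
    intro β hβ hp hn
    by_cases hj : β = D.α j
    · refine ⟨L, rfl, fun v => ?_⟩
      rw [hj, ← D.s_apply', wordProd_cons]
      exact (D.s_s j _).symm
    · have hn' : D.IsNonnegComb (-((D.wordProd L)⁻¹ (D.s j β))) := by
        rw [wordProd_cons, mul_inv_rev, s_inv] at hn
        exact hn
      obtain ⟨L', h1, h2⟩ := ih (D.s j β) (D.s_root β hβ j) (D.s_pos hβ hp j hj) hn'
      refine ⟨j :: L', by simp [h1], fun v => ?_⟩
      rw [wordProd_cons, wordProd_cons]
      change D.s j (D.wordProd L' v) = D.s j (D.wordProd L v) -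
        D.pairing (D.s j (D.wordProd L v)) β • β
      rw [h2, map_sub, map_smul, D.s_s, D.pairing_W (D.s_mem_W j), D.s_inv]

lemma len_of_neg (D : RootSystemWithBase V) {w : V ≃ₗ[ℝ] V} (hw : w ∈ D.W) (i : Fin D.l)
    (h : D.IsNonnegComb (-(w⁻¹ (D.α i)))) : D.len (D.s i * w) + 1 = D.len w := by
  apply le_antisymm
  · obtain ⟨L, h1, rfl⟩ := D.len_spec hw
    obtain ⟨L', h2, h3⟩ := D.exchange L _ (D.α_mem i) (D.nonneg_α i) h
    have : D.s i * D.wordProd L = D.wordProd L' := by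
      ext v
      rw [h3, ← D.s_apply']
      rfl
    rw [this, ← h1, ← h2]
    exact Nat.succ_le_succ (D.len_le L')
  · have := D.len_s_mul_le (D.W.mul_mem (D.s_mem_W i) hw) i
    rwa [← mul_assoc, s_mul_s, one_mul] at this

lemma len_of_pos (D : RootSystemWithBase V) {w : V ≃ₗ[ℝ] V} (hw : w ∈ D.W) (i : Fin D.l)
    (h : D.IsNonnegComb (w⁻¹ (D.α i))) : D.len (D.s i * w) = D.len w + 1 := by
  have := D.len_of_neg (D.W.mul_mem (D.s_mem_W i) hw) i (by
    rw [mul_inv_rev, s_inv]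
    change D.IsNonnegComb (-(w⁻¹ (D.s i (D.α i))))
    rwa [s_α, map_neg, neg_neg])
  rw [← mul_assoc, s_mul_s, one_mul] at this
  exact this.symm

lemma len_one (D : RootSystemWithBase V) : D.len 1 = 0 := by
  have := D.len_le []
  simpa [wordProd] using this

/-- An element of `W` preserving positivity of simple roots is trivial. -/
lemma eq_one (D : RootSystemWithBase V) {w : V ≃ₗ[ℝ] V} (hw : w ∈ D.W)
    (h : ∀ i, D.IsNonnegComb (w⁻¹ (D.α i))) : w = 1 := by
  obtain ⟨L, h1, h2⟩ := D.len_spec hw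
  cases L with
  | nil => rw [← h2]; simp [wordProd]
  | cons i L =>
    exfalso
    have h3 := D.len_of_pos hw i (h i)
    have h4 : D.s i * w = D.wordProd L := by
      rw [← h2, wordProd_cons, ← mul_assoc, s_mul_s, one_mul]
    rw [h4, ← h1] at h3
    have := D.len_le L
    simp only [List.length_cons] at h3
    omega

lemma pairing_nonneg (D : RootSystemWithBase V) {ω : V} (hω : D.IsDominant ω) {x : V}
    (hx : D.IsNonnegComb x) : 0 ≤ ⟪ω, x⟫ := by
  obtain ⟨c, hc, rfl⟩ := hx
  rw [inner_sum]
  refine Finset.sum_nonneg fun i _ => ?_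
  rw [inner_smul_right]
  refine mul_nonneg (hc i) ?_
  have h := hω i
  have h2 := D.inner_α_pos i
  unfold pairing at h
  rw [le_div_iff₀ h2] at h
  linarith

lemma pairing_pos_iff (D : RootSystemWithBase V) (ω : V) {β : V} (hβ : β ∈ D.Φ) :
    0 < D.pairing ω β ↔ 0 < ⟪ω, β⟫ := by
  have h2 : 0 < ⟪β, β⟫ := real_inner_self_pos.mpr (D.root_ne_zero _ hβ)
  unfold pairing
  rw [lt_div_iff₀ h2]
  constructor <;> intro <;> linarith

lemma pairing_neg' (D : RootSystemWithBase V) (ω β : V) :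
    D.pairing ω (-β) = - D.pairing ω β := by
  simp [pairing, neg_div]

lemma root_nonneg_of_pos (D : RootSystemWithBase V) {ω : V} (hω : D.IsDominant ω) {β : V}
    (hβ : β ∈ D.Φ) (h : 0 < ⟪ω, β⟫) : D.IsNonnegComb β := by
  rcases D.root_cases hβ with h1 | h1
  · exact h1
  · have := D.pairing_nonneg hω h1
    rw [inner_neg_right] at this
    linarith

lemma root_nonpos_of_neg (D : RootSystemWithBase V) {ω : V} (hω : D.IsDominant ω) {β : V}
    (hβ : β ∈ D.Φ) (h : ⟪ω, β⟫ < 0) : D.IsNonnegComb (-β) := by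
  rcases D.root_cases hβ with h1 | h1
  · have := D.pairing_nonneg hω h1
    linarith
  · exact h1

lemma WI_nonneg (D : RootSystemWithBase V) {ω : V} (hω : D.IsDominant ω) {w : V ≃ₗ[ℝ] V}
    (hw : w ∈ D.WI ω) {x : V} (hx : D.IsNonnegComb x) (h0 : ⟪ω, x⟫ = 0) :
    D.IsNonnegComb (w x) := by
  obtain ⟨c, hc, rfl⟩ := hx
  have hn : ∀ i ∈ Finset.univ, 0 ≤ ⟪ω, c i • D.α i⟫ := fun i _ =>
    D.pairing_nonneg hω (D.nonneg_smul (hc i) (D.nonneg_α i))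
  rw [inner_sum, Finset.sum_eq_zero_iff_of_nonneg hn] at h0
  rw [map_sum]
  refine D.nonneg_sum fun i => ?_
  rw [map_smul]
  have h := h0 i (Finset.mem_univ i)
  rw [inner_smul_right, mul_eq_zero] at h
  rcases h with h | h
  · rw [h, zero_smul]; exact D.nonneg_zero
  · exact D.nonneg_smul (hc i) (hw.2 i (by simp [pairing, h])).1

lemma WI_inj (D : RootSystemWithBase V) {ω : V} (hω : D.IsDominant ω) {τ σ : V ≃ₗ[ℝ] V}
    (hτ : τ ∈ D.WI ω) (hσ : σ ∈ D.WI ω) (h : τ ω = σ ω) : τ = σ := by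
  have hW : τ⁻¹ * σ ∈ D.W := D.W.mul_mem (D.W.inv_mem hτ.1) hσ.1
  have key : τ⁻¹ * σ = 1 := by
    refine D.eq_one hW fun i => ?_
    have hm := D.root_W (D.W.inv_mem hW) (D.α_mem i)
    set u := (τ⁻¹ * σ)⁻¹ with hu
    have hσu : σ (u (D.α i)) = τ (D.α i) := by
      have : σ * u = τ := by rw [hu]; group
      exact congrArg (fun f : V ≃ₗ[ℝ] V => f (D.α i)) this
    have hin : ⟪ω, u (D.α i)⟫ = ⟪ω, D.α i⟫ := by
      rw [← D.inner_W hσ.1, hσu, ← h, D.inner_W hτ.1]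
    rcases (D.pairing_nonneg hω (D.nonneg_α i)).lt_or_eq with h1 | h1
    · exact D.root_nonneg_of_pos hω hm (hin ▸ h1)
    · rcases D.root_cases hm with h2 | h2
      · exact h2
      exfalso
      have h3 := D.WI_nonneg hω hσ h2 (by rw [inner_neg_right, hin, ← h1, neg_zero])
      rw [map_neg, hσu] at h3
      have h4 := D.WI_nonneg hω hτ (D.nonneg_α i) h1.symm
      exact D.root_ne_zero _ (D.root_W hτ.1 (D.α_mem i)) (D.nonneg_antisymm h4 h3)
  rw [← mul_one τ, ← key, mul_inv_cancel_left]

lemma WI_s_mul (D : RootSystemWithBase V) {ω : V} {w : V ≃ₗ[ℝ] V}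
    (hw : w ∈ D.WI ω) (i : Fin D.l) (h : D.pairing (w ω) (D.α i) ≠ 0) :
    D.s i * w ∈ D.WI ω := by
  refine ⟨D.W.mul_mem (D.s_mem_W i) hw.1, fun j hj => ?_⟩
  have h1 := hw.2 j hj
  have hr := D.root_W hw.1 (D.α_mem j)
  refine ⟨D.s_pos hr h1.1 i ?_, D.root_ne_zero _ (D.s_root _ hr i)⟩
  intro he
  apply h
  rw [D.pairing_W hw.1, ← he]
  have : w⁻¹ (w (D.α j)) = D.α j := LinearEquiv.symm_apply_apply w _
  rw [this, hj]

lemma pairing_orbit (D : RootSystemWithBase V) {ω : V} (hω : D.IsMinuscule ω)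
    {w : V ≃ₗ[ℝ] V} (hw : w ∈ D.W) (i : Fin D.l) :
    D.pairing (w ω) (D.α i) = -1 ∨ D.pairing (w ω) (D.α i) = 0 ∨
      D.pairing (w ω) (D.α i) = 1 := by
  rw [D.pairing_W hw]
  exact hω.2 _ (D.root_W (D.W.inv_mem hw) (D.α_mem i))

lemma orbit_int (D : RootSystemWithBase V) {ω : V} (hω : D.IsMinuscule ω)
    {w : V ≃ₗ[ℝ] V} (hw : w ∈ D.W) :
    ∃ c : Fin D.l → ℤ, ω - w ω = ∑ i, (c i : ℝ) • D.α i := by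
  obtain ⟨L, rfl⟩ := D.exists_word hw
  clear hw
  induction L with
  | nil => exact ⟨fun _ => 0, by simp [wordProd]⟩
  | cons i L ih =>
    obtain ⟨c, hc⟩ := ih
    obtain ⟨z, hz⟩ : ∃ z : ℤ, D.pairing (D.wordProd L ω) (D.α i) = z := by
      rcases D.pairing_orbit hω (D.wordProd_mem L) i with h | h | h
      · exact ⟨-1, by simp [h]⟩
      · exact ⟨0, by simp [h]⟩
      · exact ⟨1, by simp [h]⟩
    refine ⟨fun k => c k + (Pi.single i z : Fin D.l → ℤ) k, ?_⟩
    rw [wordProd_cons]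
    change ω - D.s i (D.wordProd L ω) = _
    rw [D.s_apply', hz]
    simp only [Int.cast_add, add_smul, Finset.sum_add_distrib, ← hc]
    have : ∑ k, (((Pi.single i z : Fin D.l → ℤ) k : ℤ) : ℝ) • D.α k = (z : ℝ) • D.α i := by
      rw [Finset.sum_eq_single i]
      · simp
      · intro k _ hk; simp [Pi.single_apply, hk]
      · simp
    rw [this]
    abel

lemma sum_update (D : RootSystemWithBase V) (n : Fin D.l → ℕ) (i : Fin D.l) (hi : 0 < n i) :
    ∑ k, ((Function.update n i (n i - 1) k : ℕ) : ℝ) • D.α k = ∑ k, (n k : ℝ) • D.α k - D.α i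
      ∧ ∑ k, Function.update n i (n i - 1) k + 1 = ∑ k, n k := by
  constructor
  · rw [← Finset.add_sum_erase _ _ (Finset.mem_univ i),
      ← Finset.add_sum_erase _ (fun k => (n k : ℝ) • D.α k) (Finset.mem_univ i)]
    have : ∑ k ∈ Finset.univ.erase i, ((Function.update n i (n i - 1) k : ℕ) : ℝ) • D.α k
        = ∑ k ∈ Finset.univ.erase i, (n k : ℝ) • D.α k :=
      Finset.sum_congr rfl fun k hk => by
        rw [Function.update_of_ne (Finset.ne_of_mem_erase hk)]
    rw [this, Function.update_self, Nat.cast_sub hi, sub_smul]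
    simp only [Nat.cast_one, one_smul]
    abel
  · rw [← Finset.add_sum_erase _ _ (Finset.mem_univ i),
      ← Finset.add_sum_erase _ (fun k => n k) (Finset.mem_univ i)]
    have : ∑ k ∈ Finset.univ.erase i, Function.update n i (n i - 1) k
        = ∑ k ∈ Finset.univ.erase i, n k :=
      Finset.sum_congr rfl fun k hk => by
        rw [Function.update_of_ne (Finset.ne_of_mem_erase hk)]
    rw [this, Function.update_self]
    omega

lemma forward (D : RootSystemWithBase V) {ω : V} (hω : D.IsMinuscule ω) (m : ℕ) :
    ∀ (τ σ : V ≃ₗ[ℝ] V), τ ∈ D.WI ω → σ ∈ D.WI ω → ∀ n : Fin D.l → ℕ, ∑ k, n k = m →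
      σ ω - τ ω = ∑ k, (n k : ℝ) • D.α k → D.len σ + D.len (τ * σ⁻¹) ≤ D.len τ := by
  induction m with
  | zero =>
    intro τ σ hτ hσ n hn h
    have h0 : ∀ k, n k = 0 := by simpa using hn
    have : τ = σ := D.WI_inj hω.1 hτ hσ (by
      simp [h0] at h
      exact (sub_eq_zero.mp h).symm)
    rw [this, mul_inv_cancel, D.len_one]; rfl
  | succ m ih =>
    intro τ σ hτ hσ n hn h
    have hne : σ ω - τ ω ≠ 0 := by
      intro h0
      have h1 : ∑ k, (n k : ℝ) • D.α k = ∑ k, ((0 : ℝ)) • D.α k := by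
        rw [← h, h0]; simp
      have h2 := D.coeff_unique h1
      have h3 : ∀ k, n k = 0 := fun k => by exact_mod_cast congrFun h2 k
      simp [h3] at hn
    have hpos : 0 < ⟪σ ω - τ ω, σ ω - τ ω⟫ := real_inner_self_pos.mpr hne
    obtain ⟨i, hi⟩ : ∃ i, 0 < (n i : ℝ) * ⟪σ ω - τ ω, D.α i⟫ := by
      by_contra! hcon
      have : ⟪σ ω - τ ω, σ ω - τ ω⟫ = ∑ k, (n k : ℝ) * ⟪σ ω - τ ω, D.α k⟫ := by
        have h5 : ⟪σ ω - τ ω, ∑ k, (n k : ℝ) • D.α k⟫ =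
            ∑ k, (n k : ℝ) * ⟪σ ω - τ ω, D.α k⟫ := by
          rw [inner_sum]
          simp only [inner_smul_right]
        rwa [← h] at h5
      rw [this] at hpos
      exact absurd hpos (not_lt.mpr (Finset.sum_nonpos fun k _ => hcon k))
    have hni : 0 < n i := by
      rcases Nat.eq_zero_or_pos (n i) with h0 | h0
      · simp [h0] at hi
      · exact h0
    have hin : 0 < ⟪σ ω - τ ω, D.α i⟫ := by
      have : (0 : ℝ) < n i := by exact_mod_cast hni
      exact pos_of_mul_pos_right hi this.le
    have hpp : 0 < D.pairing (σ ω) (D.α i) - D.pairing (τ ω) (D.α i) := by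
      have h1 := (D.pairing_pos_iff (σ ω - τ ω) (D.α_mem i)).mpr hin
      have h2 : D.pairing (σ ω - τ ω) (D.α i) =
        D.pairing (σ ω) (D.α i) - D.pairing (τ ω) (D.α i) := by
        unfold pairing; rw [inner_sub_left]; ring
      rwa [← h2]
    obtain ⟨hu1, hu2⟩ := D.sum_update n i hni
    have hcases : D.pairing (σ ω) (D.α i) = 1 ∨ D.pairing (τ ω) (D.α i) = -1 := by
      rcases D.pairing_orbit hω hσ.1 i with a | a | a <;>
      rcases D.pairing_orbit hω hτ.1 i with b | b | b <;>
      first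
        | exact Or.inl a
        | exact Or.inr b
        | (exfalso; rw [a, b] at hpp; norm_num at hpp)
    rcases hcases with hc | hc
    · have hmem := D.WI_s_mul hσ i (by rw [hc]; norm_num)
      have h1 := ih τ (D.s i * σ) hτ hmem (Function.update n i (n i - 1)) (by omega) (by
        rw [hu1, ← h]
        change D.s i (σ ω) - τ ω = _
        rw [D.s_apply', hc, one_smul]
        abel)
      have hroot := D.root_W (D.W.inv_mem hσ.1) (D.α_mem i)
      have hl := D.len_of_pos hσ.1 i (D.root_nonneg_of_pos hω.1 hroot (by
        rw [← D.pairing_pos_iff _ hroot, ← D.pairing_W hσ.1, hc]; norm_num))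
      have hl2 := D.len_mul_s_le (D.W.mul_mem hτ.1 (D.W.inv_mem hmem.1)) i
      have he : τ * (D.s i * σ)⁻¹ * D.s i = τ * σ⁻¹ := by group
      rw [he] at hl2
      omega
    · have hmem := D.WI_s_mul hτ i (by rw [hc]; norm_num)
      have h1 := ih (D.s i * τ) σ hmem hσ (Function.update n i (n i - 1)) (by omega) (by
        rw [hu1, ← h]
        change σ ω - D.s i (τ ω) = _
        rw [D.s_apply', hc, neg_one_smul]
        abel)
      have hroot := D.root_W (D.W.inv_mem hτ.1) (D.α_mem i)
      have hneg : ⟪ω, τ⁻¹ (D.α i)⟫ < 0 := by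
        have h2 : 0 < ⟪τ⁻¹ (D.α i), τ⁻¹ (D.α i)⟫ :=
          real_inner_self_pos.mpr (D.root_ne_zero _ hroot)
        rw [D.pairing_W hτ.1] at hc
        unfold pairing at hc
        rw [div_eq_iff h2.ne'] at hc
        linarith
      have hl := D.len_of_neg hτ.1 i (D.root_nonpos_of_neg hω.1 hroot hneg)
      have hl2 := D.len_s_mul_le (D.W.mul_mem hmem.1 (D.W.inv_mem hσ.1)) i
      have he : D.s i * (D.s i * τ * σ⁻¹) = τ * σ⁻¹ := by
        rw [mul_assoc, ← mul_assoc, s_mul_s, one_mul]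
      rw [he] at hl2
      omega

lemma backward (D : RootSystemWithBase V) {ω : V} (hω : D.IsDominant ω)
    {σ : V ≃ₗ[ℝ] V} (hσ : σ ∈ D.W) (L : List (Fin D.l)) :
    D.len σ + L.length ≤ D.len (D.wordProd L * σ) → D.vle ((D.wordProd L * σ) ω) (σ ω) := by
  induction L with
  | nil =>
    intro _
    have : (D.wordProd [] * σ) ω = σ ω := by simp [wordProd]
    rw [vle, this, sub_self]
    exact D.nonneg_zero
  | cons i L ih =>
    intro h
    rw [wordProd_cons, mul_assoc] at h ⊢
    have hm := D.W.mul_mem (D.wordProd_mem L) hσ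
    have hle := D.len_s_mul_le hm i
    simp only [List.length_cons] at h
    have h1 := ih (by omega)
    set w := D.wordProd L * σ
    have hroot := D.root_W (D.W.inv_mem hm) (D.α_mem i)
    have h2 : D.IsNonnegComb (w⁻¹ (D.α i)) := by
      rcases D.root_cases hroot with h3 | h3
      · exact h3
      · have h4 := D.len_of_neg hm i h3
        have h5 : D.len w ≤ D.len σ + L.length := by
          have h6 := D.len_mul_le (D.wordProd_mem L) hσ
          have h7 := D.len_le L
          change D.len (D.wordProd L * σ) ≤ _
          omega
        omega
    have h3 : 0 ≤ D.pairing (w ω) (D.α i) := by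
      rw [D.pairing_W hm]
      exact div_nonneg (mul_nonneg (by norm_num) (D.pairing_nonneg hω h2)) real_inner_self_nonneg
    have h4 := D.nonneg_add h1 (D.nonneg_smul h3 (D.nonneg_α i))
    change D.IsNonnegComb (σ ω - D.s i (w ω))
    rw [D.s_apply']
    convert h4 using 1
    abel

end RootSystemWithBase

/-- Let `ω` be a minuscule weight and `τ, σ ∈ W^I`.  Then
`τ(ω) ≤ σ(ω)` (difference a nonnegative combination of simple roots) if and only if
`σ ≤ τ`, i.e. `ℓ(τ) = ℓ(σ) + ℓ(τ σ⁻¹)`. -/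
theorem stmt7 {V : Type*} [NormedAddCommGroup V] [InnerProductSpace ℝ V]
    (D : RootSystemWithBase V) (ω : V) (hω : D.IsMinuscule ω)
    (τ σ : V ≃ₗ[ℝ] V) (hτ : τ ∈ D.WI ω) (hσ : σ ∈ D.WI ω) :
    D.vle (τ ω) (σ ω) ↔ D.len τ = D.len σ + D.len (τ * σ⁻¹) := by
  have hW := D.W.mul_mem hτ.1 (D.W.inv_mem hσ.1)
  have hts : τ * σ⁻¹ * σ = τ := by group
  constructor
  · rintro ⟨c, hc, h⟩
    apply le_antisymm
    · have := D.len_mul_le hW hσ.1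
      rw [hts] at this
      omega
    · obtain ⟨a, ha⟩ := D.orbit_int hω hτ.1
      obtain ⟨b, hb⟩ := D.orbit_int hω hσ.1
      have h1 : ∑ i, c i • D.α i = ∑ i, ((a i : ℝ) - b i) • D.α i := by
        simp only [sub_smul, Finset.sum_sub_distrib, ← ha, ← hb, ← h]
        abel
      have h2 := D.coeff_unique h1
      have h3 : ∀ i, 0 ≤ a i - b i := fun i => by
        have := hc i
        rw [congrFun h2 i] at this
        exact_mod_cast this
      refine D.forward hω _ τ σ hτ hσ (fun i => (a i - b i).toNat) rfl ?_
      rw [h, h2]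
      refine Finset.sum_congr rfl fun i _ => ?_
      congr 1
      have := Int.toNat_of_nonneg (h3 i)
      have h4 : (((a i - b i).toNat : ℤ) : ℝ) = ((a i - b i : ℤ) : ℝ) := by rw [this]
      push_cast at h4 ⊢
      simpa using h4.symm
  · intro h
    obtain ⟨L, h1, h2⟩ := D.len_spec hW
    have := D.backward hω.1 hσ.1 L (by rw [h2, hts, h1, h])
    rwa [h2, hts] at this
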